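/- arXiv:1705.04912 — 2 statements merged into one kernel-verified Lean document; each statement's English description precedes it below -/
import Mathlib

section
/- Let α be the sequence α_i = F_{i+1}, let α̃_i = (−1)^i·α_i, and let α̌ and (α̃)̌ denote the binomial transforms of α and α̃ respectively. Then for every n ≥ 0, det A_{(α̃)̌, α}(n) = F_{n+2} and det A_{α̌, α̃}(n) = F_{n+2}. -/
/-- The Fibonacci sequence (as integers): `F 0 = 0`, `F 1 = 1`, `F n = F (n-1) + F (n-2)`. -/
def fibZ : ℕ → ℤ
  | 0 => 0
  | 1 => 1
  | n + 2 => fibZ (n + 1) + fibZ n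

/-- The binomial transform: `α̌_i = Σ_{k=0}^{i} C(i,k) * α_k`. -/
def btrans (α : ℕ → ℤ) (i : ℕ) : ℤ :=
  ∑ k ∈ Finset.range (i + 1), (i.choose k : ℤ) * α k

/-- Entry of the 7-matrix `A_{α,β}`:
`A (i,0) = α i`, `A (0,j) = β j`, and `A (i,j) = A (i-1,j-1) + A (i-1,j)` for `i,j ≥ 1`
(consistent when `α 0 = β 0`). -/
def sevenEntry (α β : ℕ → ℤ) : ℕ → ℕ → ℤ
  | 0, j => β j
  | i + 1, 0 => α (i + 1)
  | i + 1, j + 1 => sevenEntry α β i j + sevenEntry α β i (j + 1)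

/-- The 7-matrix `A_{α,β}(n)` of order `n+1`. -/
def sevenM (α β : ℕ → ℤ) (n : ℕ) : Matrix (Fin (n + 1)) (Fin (n + 1)) ℤ :=
  Matrix.of fun i j => sevenEntry α β (i : ℕ) (j : ℕ)

/-!
Column by column, the recurrence of a 7-matrix is Pascal's rule, so `A_{γ̌, β}(n) = P T` with `P`
the unitriangular Pascal matrix and `T` the Toeplitz matrix with first column `γ` and first row `β`.

When `…, γ 2, γ 1, γ 0 = β 0, β 1, β 2, …` satisfies a second-order linear recurrence up to an error
`c` in the equation for `β 1`, every column of `T` from the third on is a combination of the two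
columns before it plus `c` times the basis vector supported just above the diagonal. Eliminating the
last column deletes the last-but-one row, so induction leaves only the `2 × 2` minor of `T` on the
first and last rows and the first two columns. For the Fibonacci numbers this minor is, up to sign,
`F_n + F_{n+1}`.
-/

open Finset Matrix

section ColumnRecurrence

variable {R : Type*} [CommRing R] {n : ℕ}

theorem det_eq_mul_det_submatrix_of_col_eq (A : Matrix (Fin (n + 1)) (Fin (n + 1)) R)
    {k l p q : Fin (n + 1)} {a b c : R} (hp : p ≠ l) (hq : q ≠ l)
    (hcol : ∀ i, A i l = a * A i p + b * A i q + if i = k then c else 0) :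
    A.det = (-1) ^ (k + l : ℕ) * c * (A.submatrix k.succAbove l.succAbove).det := by
  have hcol' : A.col l = a • A.col p + b • A.col q + Pi.single k c := by
    ext i
    simpa only [Pi.add_apply, Pi.smul_apply, smul_eq_mul, col_apply, Pi.single_apply] using hcol i
  calc A.det = (A.updateCol l (A.col l)).det := congrArg det (updateCol_eq_self A l).symm
    _ = (A.updateCol l (Pi.single k c)).det := by
      have hdep : ∀ m ≠ l, (A.updateCol l (A.col m)).det = 0 := fun m hm ↦
        det_updateCol_eq_zero hm
      rw [hcol', det_updateCol_add, det_updateCol_add, det_updateCol_smul, det_updateCol_smul,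
        hdep p hp, hdep q hq, mul_zero, mul_zero, zero_add, zero_add]
    _ = A.adjugate l k * c := by
      rw [← cramer_apply, cramer_eq_adjugate_mulVec, mulVec_single]
      rfl
    _ = _ := by rw [adjugate_fin_succ_eq_det_submatrix]; ring

theorem det_of_col_recurrence {a b c : R} (A : Matrix (Fin (n + 2)) (Fin (n + 2)) R)
    (hrec : ∀ i (j : Fin n), A i j.succ.succ =
      a * A i j.succ.castSucc + b * A i j.castSucc.castSucc +
        if i = j.succ.castSucc then c else 0) :
    A.det = (-c) ^ n * (A 0 0 * A (Fin.last _) 1 - A 0 1 * A (Fin.last _) 0) := by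
  induction n with
  | zero => rw [det_fin_two, pow_zero, one_mul]; rfl
  | succ n ih =>
    let k : Fin (n + 3) := (Fin.last (n + 1)).castSucc
    let B := A.submatrix k.succAbove Fin.castSucc
    have hexpand : A.det = -c * B.det := by
      have hsign : (-1 : R) ^ (k + Fin.last (n + 2) : ℕ) = -1 :=
        Odd.neg_one_pow ⟨n + 1, by simp only [k, Fin.val_castSucc, Fin.val_last]; ring⟩
      rw [det_eq_mul_det_submatrix_of_col_eq A (k := k) (l := Fin.last _) (Fin.castSucc_ne_last _)
        (Fin.castSucc_ne_last _) (hrec · (Fin.last n)), hsign, Fin.succAbove_last, neg_one_mul]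
    have hB : ∀ i (j : Fin n), B i j.succ.succ =
        a * B i j.succ.castSucc + b * B i j.castSucc.castSucc +
          if i = j.succ.castSucc then c else 0 := by
      intro i j
      have hpivot : k.succAbove j.succ.castSucc = j.castSucc.succ.castSucc :=
        Fin.succAbove_of_castSucc_lt _ _ (by simp [k, Fin.lt_def])
      have hrow : k.succAbove i = j.castSucc.succ.castSucc ↔ i = j.succ.castSucc := by
        rw [← hpivot, Fin.succAbove_right_inj]
      have hcol := hrec (k.succAbove i) j.castSucc
      simp only [hrow] at hcol
      exact hcol
    have hfirst : k.succAbove 0 = 0 := Fin.succAbove_ne_zero_zero (by simp [k, Fin.ext_iff])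
    have hlast : k.succAbove (Fin.last (n + 1)) = Fin.last (n + 2) :=
      Fin.succAbove_castSucc_self _
    calc A.det = -c * ((-c) ^ n *
          (A (k.succAbove 0) 0 * A (k.succAbove (Fin.last _)) 1 -
            A (k.succAbove 0) 1 * A (k.succAbove (Fin.last _)) 0)) := by
          rw [hexpand, ih B hB]; rfl
      _ = (-c) ^ (n + 1) * (A 0 0 * A (Fin.last _) 1 - A 0 1 * A (Fin.last _) 0) := by
          rw [hfirst, hlast, pow_succ', mul_assoc]

end ColumnRecurrence

section Toeplitz

/-- The entries of the Toeplitz matrix with first column `γ` and first row `β`, where `β` provides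
the corner. The recursion on both indices mirrors that of `sevenEntry`. -/
def toeplitzEntry {R : Type*} (γ β : ℕ → R) : ℕ → ℕ → R
  | 0, j => β j
  | i + 1, 0 => γ (i + 1)
  | i + 1, j + 1 => toeplitzEntry γ β i j

/-- The Toeplitz matrix of order `n + 1` with first column `γ` and first row `β`. -/
def toeplitzMatrix {R : Type*} (γ β : ℕ → R) (n : ℕ) : Matrix (Fin (n + 1)) (Fin (n + 1)) R :=
  Matrix.of fun i j ↦ toeplitzEntry γ β i j

variable {R : Type*} {γ β : ℕ → R}

theorem toeplitzEntry_zero_right (h : γ 0 = β 0) (i : ℕ) : toeplitzEntry γ β i 0 = γ i := by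
  cases i with
  | zero => exact h.symm
  | succ i => rfl

theorem toeplitzEntry_swap (h : γ 0 = β 0) (i j : ℕ) :
    toeplitzEntry β γ i j = toeplitzEntry γ β j i := by
  induction i generalizing j with
  | zero => exact (toeplitzEntry_zero_right h j).symm
  | succ i ih =>
    cases j with
    | zero => rfl
    | succ j => exact ih j

theorem transpose_toeplitzMatrix (h : γ 0 = β 0) (n : ℕ) :
    (toeplitzMatrix γ β n)ᵀ = toeplitzMatrix β γ n := by
  ext i j
  exact (toeplitzEntry_swap h i j).symm

theorem toeplitzEntry_add_two [Semiring R] {a b c : R} (h : γ 0 = β 0)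
    (hβ : ∀ j, β (j + 2) = a * β (j + 1) + b * β j)
    (hγ : ∀ i, γ i = a * γ (i + 1) + b * γ (i + 2))
    (hc : β 1 = a * β 0 + b * γ 1 + c) (i j : ℕ) :
    toeplitzEntry γ β i (j + 2) =
      a * toeplitzEntry γ β i (j + 1) + b * toeplitzEntry γ β i j +
        if i = j + 1 then c else 0 := by
  induction i generalizing j with
  | zero => simpa [toeplitzEntry] using hβ j
  | succ i ih =>
    cases j with
    | zero =>
      rcases i with _ | i
      · simpa [toeplitzEntry] using hc
      · simpa [toeplitzEntry, toeplitzEntry_zero_right h] using hγ i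
    | succ j => simpa [toeplitzEntry] using ih j

theorem det_toeplitzMatrix_of_recurrence [CommRing R] {a b c : R} (h : γ 0 = β 0)
    (hβ : ∀ j, β (j + 2) = a * β (j + 1) + b * β j)
    (hγ : ∀ i, γ i = a * γ (i + 1) + b * γ (i + 2))
    (hc : β 1 = a * β 0 + b * γ 1 + c) (n : ℕ) :
    (toeplitzMatrix γ β (n + 1)).det = (-c) ^ n * (β 0 * γ n - β 1 * γ (n + 1)) := by
  rw [det_of_col_recurrence (a := a) (b := b) (c := c)]
  · simp [toeplitzMatrix, toeplitzEntry, toeplitzEntry_zero_right h, h]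
  · intro i j
    simpa [toeplitzMatrix, Fin.ext_iff] using toeplitzEntry_add_two h hβ hγ hc i j

end Toeplitz

section SevenMatrix

variable {γ β : ℕ → ℤ}

theorem btrans_zero (ω : ℕ → ℤ) : btrans ω 0 = ω 0 := by
  simp [btrans]

theorem btrans_succ (ω : ℕ → ℤ) (i : ℕ) :
    btrans ω (i + 1) = btrans ω i + btrans (fun k ↦ ω (k + 1)) i :=
  sum_choose_succ_mul (fun k _ ↦ ω k) i

theorem btrans_eq_sum_range (ω : ℕ → ℤ) {i N : ℕ} (hi : i < N) :
    btrans ω i = ∑ k ∈ range N, (i.choose k : ℤ) * ω k := by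
  refine sum_subset (range_subset_range.2 hi) fun k _ hk ↦ ?_
  rw [Nat.choose_eq_zero_of_lt (by simpa using hk), Nat.cast_zero, zero_mul]

theorem sevenEntry_btrans (h : γ 0 = β 0) (i j : ℕ) :
    sevenEntry (btrans γ) β i j = btrans (fun k ↦ toeplitzEntry γ β k j) i := by
  induction i generalizing j with
  | zero => rw [btrans_zero]; rfl
  | succ i ih =>
    cases j with
    | zero => simp only [sevenEntry, toeplitzEntry_zero_right h]
    | succ j => rw [sevenEntry, ih, ih, btrans_succ, add_comm]; rfl

/-- The lower triangular Pascal matrix of order `n + 1`, which implements the binomial transform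
on the first `n + 1` terms of a sequence. -/
def pascalMatrix (R : Type*) [NatCast R] (n : ℕ) : Matrix (Fin (n + 1)) (Fin (n + 1)) R :=
  Matrix.of fun i k ↦ ((i : ℕ).choose k : R)

theorem det_pascalMatrix (R : Type*) [CommRing R] (n : ℕ) : (pascalMatrix R n).det = 1 := by
  have hlower : (pascalMatrix R n).IsLowerTriangular := fun i k (hik : i < k) ↦ by
    simp [pascalMatrix, Nat.choose_eq_zero_of_lt hik]
  rw [det_of_isLowerTriangular _ hlower]
  simp [pascalMatrix]

theorem sevenM_btrans (h : γ 0 = β 0) (n : ℕ) :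
    sevenM (btrans γ) β n = pascalMatrix ℤ n * toeplitzMatrix γ β n := by
  ext i j
  calc sevenEntry (btrans γ) β i j
      = ∑ k ∈ range (n + 1), ((i : ℕ).choose k : ℤ) * toeplitzEntry γ β k j := by
        rw [sevenEntry_btrans h, btrans_eq_sum_range _ i.2]
    _ = (pascalMatrix ℤ n * toeplitzMatrix γ β n) i j := sum_range _

theorem det_sevenM_btrans (h : γ 0 = β 0) (n : ℕ) :
    (sevenM (btrans γ) β n).det = (toeplitzMatrix γ β n).det := by
  rw [sevenM_btrans h, det_mul, det_pascalMatrix, one_mul]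

end SevenMatrix

theorem det_toeplitzMatrix_fibZ (n : ℕ) :
    (toeplitzMatrix (fun i ↦ (-1) ^ i * fibZ (i + 1)) (fun i ↦ fibZ (i + 1)) n).det =
      fibZ (n + 2) := by
  cases n with
  | zero => simp [toeplitzMatrix, toeplitzEntry, fibZ]
  | succ n =>
    have hfib : ∀ m, fibZ (m + 2) = fibZ (m + 1) + fibZ m := fun _ ↦ rfl
    rw [det_toeplitzMatrix_of_recurrence (a := 1) (b := 1) (c := 1)]
    · have hsign : (-1 : ℤ) ^ n * (-1) ^ n = 1 := by rw [← mul_pow]; simp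
      calc (-1) ^ n * (fibZ 1 * ((-1) ^ n * fibZ (n + 1)) -
            fibZ 2 * ((-1) ^ (n + 1) * fibZ (n + 2)))
          = (-1) ^ n * (-1) ^ n * (fibZ (n + 2) + fibZ (n + 1)) := by
            simp only [fibZ]
            ring
        _ = fibZ (n + 3) := by rw [hsign, one_mul, ← hfib]
    · simp
    · intro j
      rw [one_mul, one_mul, hfib (j + 1)]
    · intro i
      rw [hfib (i + 1)]
      ring
    · simp [fibZ]

/-- For `α_i = F_{i+1}`: `det A_{(α̃)̌, α}(n) = F_{n+2}` and
`det A_{α̌, α̃}(n) = F_{n+2}` for every `n ≥ 0`. -/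
theorem det_seven_fib_succ (n : ℕ) :
    (sevenM (btrans fun i => (-1) ^ i * fibZ (i + 1)) (fun i => fibZ (i + 1)) n).det =
      fibZ (n + 2) ∧
    (sevenM (btrans fun i => fibZ (i + 1)) (fun i => (-1) ^ i * fibZ (i + 1)) n).det =
      fibZ (n + 2) := by
  set α : ℕ → ℤ := fun i ↦ fibZ (i + 1)
  set αalt : ℕ → ℤ := fun i ↦ (-1) ^ i * fibZ (i + 1)
  have h : αalt 0 = α 0 := by simp [α, αalt]
  have hdet : (toeplitzMatrix αalt α n).det = fibZ (n + 2) := det_toeplitzMatrix_fibZ n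
  constructor
  · rw [det_sevenM_btrans h, hdet]
  · rw [det_sevenM_btrans h.symm, ← transpose_toeplitzMatrix h, det_transpose, hdet]
end

section
/- Let a, b, c be complex numbers and n ≥ 3 an integer. Then det T_n(a,b,c) = 0 if a = b = c; det T_n(a,b,c) = (c + a(n−1))·(c − a)^{n−1} if a = b ≠ c; and det T_n(a,b,c) = (b/(b−a))·(c − a)^n − (a/(b−a))·(c − b)^n if a ≠ b. -/
/-- `T_n(a,b,c)`: the `n × n` Toeplitz matrix with diagonal entries `c`, entries strictly
above the diagonal `a`, and entries strictly below the diagonal `b`. -/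
def toeplitz3 (a b c : ℂ) (n : ℕ) : Matrix (Fin n) (Fin n) ℂ :=
  Matrix.of fun i j => if (i : ℕ) = (j : ℕ) then c else if (i : ℕ) < (j : ℕ) then a else b

/-!
Adding `x` to every entry is a rank-one perturbation, so `det (T + x J)`, with `J` the all-ones
matrix, is an affine function of `x`. At `x = -a` and at `x = -b` the matrix is triangular and the
determinant is a product; when `a ≠ b`, interpolating between these two values at `x = 0` gives
`det T`. When `a = b` the two values coincide, but then `T = (c - a) I + a J` and its determinant
is a value of the characteristic polynomial of a rank-one matrix.
-/

open Matrix

section RankOne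

variable {ι R : Type*} [Fintype ι] [DecidableEq ι] [CommRing R]

theorem det_add_smul_vecMulVec (A : Matrix ι ι R) (u v : ι → R) (x : R) :
    (A + x • vecMulVec u v).det =
      A.det + x * (fromBlocks A (replicateCol Unit (-u)) (replicateRow Unit v) 0).det := by
  -- The Schur complement moves the perturbation into a single column of a bordered matrix.
  let M := fromBlocks A (replicateCol Unit (-u)) (replicateRow Unit v) 0
  have bordered : fromBlocks A (replicateCol Unit (-(x • u))) (replicateRow Unit v) 1 =
      M.updateCol (Sum.inr ()) (Sum.elim (0 : ι → R) 1 + x • Sum.elim (-u) 0) := by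
    ext (i | i) (j | j) <;> simp [M]
  have unperturbed : M.updateCol (Sum.inr ()) (Sum.elim (0 : ι → R) 1) =
      fromBlocks A 0 (replicateRow Unit v) 1 := by
    ext (i | i) (j | j) <;> simp [M]
  have coefficient : M.updateCol (Sum.inr ()) (Sum.elim (-u) 0) = M := by
    ext (i | i) (j | j) <;> simp [M]
  calc (A + x • vecMulVec u v).det
      = (fromBlocks A (replicateCol Unit (-(x • u))) (replicateRow Unit v) 1).det := by
        rw [det_fromBlocks_one₂₂, ← vecMulVec_eq, neg_vecMulVec, smul_vecMulVec, sub_neg_eq_add]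
    _ = (fromBlocks A 0 (replicateRow Unit v) 1).det + x * M.det := by
        rw [bordered, det_updateCol_add, det_updateCol_smul, unperturbed, coefficient]
    _ = A.det + x * M.det := by rw [det_fromBlocks_zero₁₂, det_one, mul_one]

theorem sub_mul_det_eq_interpolate_vecMulVec (A : Matrix ι ι R) (u v : ι → R) (x y : R) :
    (y - x) * A.det =
      y * (A + x • vecMulVec u v).det - x * (A + y • vecMulVec u v).det := by
  rw [det_add_smul_vecMulVec, det_add_smul_vecMulVec]
  ring

theorem det_scalar_add_vecMulVec (r : R) (u v : ι → R) :
    (scalar ι r + vecMulVec u v).det =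
      r ^ Fintype.card ι + u ⬝ᵥ v * r ^ (Fintype.card ι - 1) :=
  calc (scalar ι r + vecMulVec u v).det
      = (vecMulVec (-u) v).charpoly.eval r := by
        rw [eval_charpoly, neg_vecMulVec, sub_neg_eq_add]
    _ = r ^ Fintype.card ι + u ⬝ᵥ v * r ^ (Fintype.card ι - 1) := by
        rw [charpoly_vecMulVec, neg_dotProduct, neg_smul, sub_neg_eq_add]
        simp

end RankOne

/-- The matrix with diagonal `d`, all entries above the diagonal equal to `a` and all entries below
it equal to `b`, over any ordered index type. For constant `d` and index type `Fin n` it is the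
Toeplitz matrix `T_n(a,b,c)`. -/
def constOffDiag {ι R : Type*} [LinearOrder ι] (a b : R) (d : ι → R) : Matrix ι ι R :=
  of fun i j => if i = j then d i else if i < j then a else b

namespace constOffDiag

variable {ι R : Type*} [LinearOrder ι] [CommRing R]

theorem add_smul_vecMulVec_one (a b : R) (d : ι → R) (x : R) :
    constOffDiag a b d + x • vecMulVec 1 1 =
      constOffDiag (a + x) (b + x) (fun i => d i + x) := by
  ext i j
  simp only [constOffDiag, Matrix.add_apply, Matrix.smul_apply, vecMulVec_apply, of_apply,
    Pi.one_apply, smul_eq_mul, mul_one]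
  split_ifs <;> rfl

variable [Fintype ι]

theorem det_zero_above (b : R) (d : ι → R) : (constOffDiag 0 b d).det = ∏ i, d i := by
  rw [det_of_isLowerTriangular]
  · simp [constOffDiag]
  · intro i j (hij : i < j)
    simp [constOffDiag, hij, hij.ne]

theorem det_zero_below (a : R) (d : ι → R) : (constOffDiag a 0 d).det = ∏ i, d i := by
  rw [det_of_isUpperTriangular]
  · simp [constOffDiag]
  · intro i j (hji : j < i)
    simp [constOffDiag, hji.ne', hji.not_gt]

theorem sub_mul_det (a b : R) (d : ι → R) :
    (b - a) * (constOffDiag a b d).det = b * ∏ i, (d i - a) - a * ∏ i, (d i - b) := by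
  have h := sub_mul_det_eq_interpolate_vecMulVec (constOffDiag a b d) 1 1 (-a) (-b)
  simp only [add_smul_vecMulVec_one, add_neg_cancel, det_zero_above, det_zero_below,
    ← sub_eq_add_neg] at h
  linear_combination -h

theorem det_self [Nonempty ι] (a c : R) :
    (constOffDiag a a fun _ : ι => c).det =
      (c + a * ((Fintype.card ι - 1 : ℕ) : R)) * (c - a) ^ (Fintype.card ι - 1) := by
  have rank_one : (constOffDiag a a fun _ : ι => c) =
      scalar ι (c - a) + vecMulVec (fun _ => a) 1 := by
    ext i j
    by_cases hij : i = j <;> simp [constOffDiag, hij]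
  have dot_one : (fun _ : ι => a) ⬝ᵥ 1 = (Fintype.card ι : R) * a := by simp [dotProduct]
  obtain ⟨m, hm⟩ := Nat.exists_eq_add_one.2 (Fintype.card_pos (α := ι))
  rw [rank_one, det_scalar_add_vecMulVec, dot_one, hm, Nat.add_sub_cancel]
  push_cast
  ring

end constOffDiag

theorem toeplitz3_eq_constOffDiag (a b c : ℂ) (n : ℕ) :
    toeplitz3 a b c n = constOffDiag a b fun _ => c := by
  ext i j
  simp only [toeplitz3, constOffDiag, of_apply, Fin.ext_iff, Fin.lt_def]

theorem det_toeplitz3_explicit_general {ι K : Type*} [Fintype ι] [LinearOrder ι] [Nonempty ι]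
    [Field K] (a b c : K) :
    (a = b →
      (constOffDiag a b fun _ : ι => c).det =
        (c + a * ((Fintype.card ι - 1 : ℕ) : K)) * (c - a) ^ (Fintype.card ι - 1)) ∧
    (a ≠ b →
      (constOffDiag a b fun _ : ι => c).det =
        b / (b - a) * (c - a) ^ Fintype.card ι - a / (b - a) * (c - b) ^ Fintype.card ι) := by
  refine ⟨?_, fun hab => ?_⟩
  · rintro rfl
    exact constOffDiag.det_self a c
  · have hba : b - a ≠ 0 := sub_ne_zero.2 hab.symm
    have h := constOffDiag.sub_mul_det a b fun _ : ι => c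
    simp only [Finset.prod_const, Finset.card_univ] at h
    field_simp
    linear_combination h

/-- Lemma 2.3 (explicit part): for `n ≥ 3`,
`det T_n = 0` if `a = b = c`;
`det T_n = (c + a(n-1))(c - a)^(n-1)` if `a = b ≠ c`;
`det T_n = (b/(b-a))(c-a)^n - (a/(b-a))(c-b)^n` if `a ≠ b`. -/
theorem det_toeplitz3_explicit (a b c : ℂ) (n : ℕ) (hn : 3 ≤ n) :
    (a = b ∧ b = c → (toeplitz3 a b c n).det = 0) ∧
    (a = b ∧ b ≠ c →
      (toeplitz3 a b c n).det = (c + a * ((n - 1 : ℕ) : ℂ)) * (c - a) ^ (n - 1)) ∧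
    (a ≠ b →
      (toeplitz3 a b c n).det =
        b / (b - a) * (c - a) ^ n - a / (b - a) * (c - b) ^ n) := by
  have : Nonempty (Fin n) := ⟨⟨0, by omega⟩⟩
  have h := det_toeplitz3_explicit_general (ι := Fin n) a b c
  rw [← toeplitz3_eq_constOffDiag, Fintype.card_fin] at h
  refine ⟨?_, fun hab => h.1 hab.1, h.2⟩
  rintro ⟨rfl, rfl⟩
  rw [h.1 rfl, sub_self, zero_pow (by omega), mul_zero]
end
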